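/- arXiv:1302.4151 — 3 statements merged into one kernel-verified Lean document; each statement's English description precedes it below -/
import Mathlib

section
/- Let R be a commutative Noetherian ring and let f : X → Y be a morphism of chain complexes of R-modules such that the homology modules H_i(X) and H_i(Y) are finitely generated over R for all i. Let x_1, …, x_n be a sequence of elements of the Jacobson radical of R and let K = K^R(x_1,…,x_n) be the Koszul complex on this sequence. Then f is a quasi-isomorphism if and only if the induced morphism K ⊗_R f : K ⊗_R X → K ⊗_R Y is a quasi-isomorphism. -/
universe u

open CategoryTheory CategoryTheory.Limits MonoidalCategory

instance curriedTensorAdditive (C : Type*) [Category C] [MonoidalCategory C] [Preadditive C]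
    [MonoidalPreadditive C] : (curriedTensor C).Additive where
  map_add := by
    intros
    ext : 2
    apply MonoidalPreadditive.add_whiskerRight

instance curriedTensorObjAdditive (C : Type*) [Category C] [MonoidalCategory C] [Preadditive C]
    [MonoidalPreadditive C] (X : C) : ((curriedTensor C).obj X).Additive where
  map_add := by
    intros
    apply MonoidalPreadditive.whiskerLeft_add

/-- The Koszul complex `K^R(x₁, …, xₙ)` on a list of elements of `R`, realized as a complex of
`R`-modules via the standard inductive description: `K^R() = R` concentrated in degree `0`, and
`K^R(x :: xs)` is the mapping cone of multiplication by `x` on `K^R(xs)`. -/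
noncomputable def koszulComplex (R : Type u) [CommRing R] :
    List R → CochainComplex (ModuleCat.{u} R) ℤ
  | [] => (CochainComplex.singleFunctor (ModuleCat.{u} R) 0).obj (ModuleCat.of R R)
  | x :: xs => CochainComplex.mappingCone (x • 𝟙 (koszulComplex R xs))

/-! Let `Z` be the mapping cone of `f`. A morphism is a quasi-isomorphism iff its mapping cone is
acyclic, and tensor products commute with mapping cones in each variable. Hence the cone of
`K ⊗ f` is `K ⊗ Z`, and it suffices to prove that `K ⊗ Z` is acyclic iff `Z` is. By the inductive
description of `K`, this amounts to comparing a complex `W` with the cone of `x • 𝟙 W`: the latter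
is acyclic iff `x` acts bijectively on the homology of `W`. That homology is finitely generated,
so by Nakayama's lemma it then vanishes. -/

open CochainComplex HomComplex HomologicalComplex

section MapBifunctor

variable {C₁ C₂ D : Type*} [Category* C₁] [Category* C₂] [Category* D]
  [Preadditive C₁] [Preadditive C₂] [Preadditive D]
  (F : C₁ ⥤ C₂ ⥤ D) [F.Additive] [∀ X₁, (F.obj X₁).Additive]

section Cochain

variable {K L M : CochainComplex C₁ ℤ} (X : CochainComplex C₂ ℤ)
  [HasMapBifunctor K X F (.up ℤ)] [HasMapBifunctor L X F (.up ℤ)] [HasMapBifunctor M X F (.up ℤ)]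
  {n m k : ℤ}

/-- The cochain `F(γ, X)` induced by a cochain `γ` in the first variable of `F`. It involves no
sign, because only the second differential of the total complex carries one. -/
noncomputable def mapBifunctorCochain (γ : Cochain K L n) :
    Cochain (mapBifunctor K X F (.up ℤ)) (mapBifunctor L X F (.up ℤ)) n :=
  Cochain.mk fun p q hpq ↦ mapBifunctorDesc fun i₁ i₂ h ↦
    (F.map (γ.v i₁ (i₁ + n) rfl)).app (X.X i₂) ≫
      ιMapBifunctor L X F (.up ℤ) (i₁ + n) i₂ q
        (show i₁ + n + i₂ = q by have : i₁ + i₂ = p := h; lia)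

lemma ι_mapBifunctorCochain (γ : Cochain K L n) {p q : ℤ} (hpq : p + n = q)
    {i₁ i₂ j₁ : ℤ} (h : i₁ + i₂ = p) (hj : i₁ + n = j₁) :
    ιMapBifunctor K X F (.up ℤ) i₁ i₂ p h ≫ (mapBifunctorCochain F X γ).v p q hpq =
      (F.map (γ.v i₁ j₁ hj)).app (X.X i₂) ≫
        ιMapBifunctor L X F (.up ℤ) j₁ i₂ q (show j₁ + i₂ = q by lia) := by
  subst hj
  simp [mapBifunctorCochain]

lemma ι_mapBifunctor_d {i₁ i₂ j₁ j₂ p q : ℤ} (h : i₁ + i₂ = p) (hq : p + 1 = q)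
    (h₁ : i₁ + 1 = j₁) (h₂ : i₂ + 1 = j₂) :
    ιMapBifunctor K X F (.up ℤ) i₁ i₂ p h ≫ (mapBifunctor K X F (.up ℤ)).d p q =
      (F.map (K.d i₁ j₁)).app (X.X i₂) ≫
          ιMapBifunctor K X F (.up ℤ) j₁ i₂ q (show j₁ + i₂ = q by lia) +
        i₁.negOnePow • ((F.obj (K.X i₁)).map (X.d i₂ j₂) ≫
          ιMapBifunctor K X F (.up ℤ) i₁ j₂ q (show i₁ + j₂ = q by lia)) := by
  rw [mapBifunctor.d_eq, Preadditive.comp_add, mapBifunctor.ι_D₁, mapBifunctor.ι_D₂,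
    mapBifunctor.d₁_eq K X F (.up ℤ) h₁ i₂ q (show j₁ + i₂ = q by lia),
    mapBifunctor.d₂_eq K X F (.up ℤ) i₁ h₂ q (show i₁ + j₂ = q by lia)]
  simp

lemma mapBifunctorCochain_comp (γ : Cochain K L n) (γ' : Cochain L M m) (h : n + m = k) :
    mapBifunctorCochain F X (γ.comp γ' h) =
      (mapBifunctorCochain F X γ).comp (mapBifunctorCochain F X γ') h := by
  ext p q hpq i₁ i₂ hi
  rw [Cochain.comp_v _ _ h p (p + n) q rfl (by lia),
    ι_mapBifunctorCochain F X _ hpq hi rfl, ← Category.assoc,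
    ι_mapBifunctorCochain F X _ rfl hi rfl, Category.assoc,
    ι_mapBifunctorCochain F X _ _ _ (show i₁ + n + m = i₁ + k by lia),
    Cochain.comp_v _ _ h i₁ (i₁ + n) _ rfl (by lia), Functor.map_comp, NatTrans.comp_app,
    Category.assoc]

lemma mapBifunctorCochain_add (γ γ' : Cochain K L n) :
    mapBifunctorCochain F X (γ + γ') =
      mapBifunctorCochain F X γ + mapBifunctorCochain F X γ' := by
  ext p q hpq i₁ i₂ hi
  rw [Cochain.add_v, Preadditive.comp_add]
  simp only [ι_mapBifunctorCochain F X _ hpq hi rfl, Cochain.add_v, Functor.map_add,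
    NatTrans.app_add, Preadditive.add_comp]

@[simp]
lemma mapBifunctorCochain_zero :
    mapBifunctorCochain F X (0 : Cochain K L n) = 0 := by
  simpa using mapBifunctorCochain_add F X (0 : Cochain K L n) 0

lemma mapBifunctorCochain_ofHom (φ : K ⟶ L) :
    mapBifunctorCochain F X (Cochain.ofHom φ) =
      Cochain.ofHom (mapBifunctorMap φ (𝟙 X) F (.up ℤ)) := by
  ext p i₁ i₂ hi
  rw [ι_mapBifunctorCochain F X _ _ hi (add_zero i₁), Cochain.ofHom_v, Cochain.ofHom_v,
    ι_mapBifunctorMap, HomologicalComplex.id_f, CategoryTheory.Functor.map_id,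
    Category.id_comp]

lemma mapBifunctorCochain_id :
    mapBifunctorCochain F X (Cochain.ofHom (𝟙 K)) =
      Cochain.ofHom (𝟙 (mapBifunctor K X F (.up ℤ))) := by
  ext p i₁ i₂ hi
  rw [ι_mapBifunctorCochain F X _ _ hi (add_zero i₁), Cochain.ofHom_v, Cochain.ofHom_v,
    HomologicalComplex.id_f, HomologicalComplex.id_f, CategoryTheory.Functor.map_id,
    NatTrans.id_app, Category.id_comp, Category.comp_id]

lemma δ_mapBifunctorCochain (h : n + 1 = m) (γ : Cochain K L n) :
    δ n m (mapBifunctorCochain F X γ) = mapBifunctorCochain F X (δ n m γ) := by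
  ext p q hpq i₁ i₂ hi
  have sign : m.negOnePow * i₁.negOnePow = -(i₁ + n).negOnePow := by
    rw [← h, Int.negOnePow_succ, Int.negOnePow_add, neg_mul, mul_comm]
  rw [δ_v n m h _ p q hpq (p + n) (p + 1) (by lia) rfl, Preadditive.comp_add,
    Linear.comp_units_smul, ← Category.assoc, ← Category.assoc,
    ι_mapBifunctorCochain F X γ rfl hi rfl, Category.assoc,
    ι_mapBifunctor_d F X (p := p + n) _ (by lia) (show i₁ + n + 1 = i₁ + m by lia) rfl,
    ι_mapBifunctor_d F X hi rfl rfl rfl,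
    ι_mapBifunctorCochain F X (δ n m γ) hpq hi rfl,
    δ_v n m h γ i₁ (i₁ + m) rfl (i₁ + n) (i₁ + 1) (by lia) rfl]
  simp only [Preadditive.add_comp, Preadditive.comp_add, Linear.units_smul_comp,
    Linear.comp_units_smul, Category.assoc, smul_add, smul_smul, sign, Functor.map_add,
    Functor.map_units_smul, NatTrans.app_add, NatTrans.app_units_zsmul, Functor.map_comp,
    NatTrans.comp_app, Units.neg_smul]
  rw [ι_mapBifunctorCochain F X γ _ _ (show i₁ + 1 + n = i₁ + m by lia),
    ι_mapBifunctorCochain F X γ _ _ (rfl : i₁ + n = i₁ + n), NatTrans.naturality_assoc]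
  abel

end Cochain

section MappingCone

variable {K L : CochainComplex C₁ ℤ} (φ : K ⟶ L) (X : CochainComplex C₂ ℤ)
  [HasBinaryBiproducts C₁] [HasBinaryBiproducts D]
  [HasMapBifunctor K X F (.up ℤ)] [HasMapBifunctor L X F (.up ℤ)]
  [HasMapBifunctor (mappingCone φ) X F (.up ℤ)]

open mappingCone

/-- Biadditive functors commute with mapping cones in their first variable. In both directions the
isomorphism is assembled from the structural cochains `inl`, `inr`, `fst` and `snd` of the two
cones. -/
noncomputable def mapBifunctorMappingConeIso :
    mappingCone (mapBifunctorMap φ (𝟙 X) F (.up ℤ)) ≅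
      mapBifunctor (mappingCone φ) X F (.up ℤ) where
  hom := desc _ (mapBifunctorCochain F X (inl φ)) (mapBifunctorMap (inr φ) (𝟙 X) F (.up ℤ)) (by
    rw [δ_mapBifunctorCochain F X (neg_add_cancel 1), δ_inl, Cochain.ofHom_comp,
      mapBifunctorCochain_comp, mapBifunctorCochain_ofHom, mapBifunctorCochain_ofHom,
      Cochain.ofHom_comp])
  inv := lift _
    (Cocycle.mk (mapBifunctorCochain F X (fst φ).1) 2 (by lia) (by
      rw [δ_mapBifunctorCochain F X (by lia), (fst φ).δ_eq_zero, mapBifunctorCochain_zero]))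
    (mapBifunctorCochain F X (snd φ)) (by
      rw [Cocycle.mk_coe, δ_mapBifunctorCochain F X (zero_add 1), δ_snd,
        ← mapBifunctorCochain_ofHom, ← mapBifunctorCochain_comp, ← mapBifunctorCochain_add,
        neg_add_cancel, mapBifunctorCochain_zero])
  hom_inv_id := by
    apply Cochain.ofHom_injective
    rw [Cochain.ofHom_comp, ofHom_lift, ofHom_desc,
      ext_cochain_from_iff _ (-1) 0 (neg_add_cancel 1),
      ← Cochain.comp_assoc_of_third_is_zero_cochain, inl_descCochain,
      ← Cochain.comp_assoc_of_third_is_zero_cochain, inr_descCochain,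
      ext_cochain_to_iff _ (-1) 0 (neg_add_cancel 1), ext_cochain_to_iff _ 0 1 (zero_add 1)]
    simp [← mapBifunctorCochain_comp, ← mapBifunctorCochain_ofHom, mapBifunctorCochain_id]
  inv_hom_id := by
    apply Cochain.ofHom_injective
    rw [Cochain.ofHom_comp, ofHom_lift, ofHom_desc,
      liftCochain_descCochain _ _ _ _ _ _ _ _ (zero_add 0), Cocycle.mk_coe,
      ← mapBifunctorCochain_ofHom, ← mapBifunctorCochain_comp, ← mapBifunctorCochain_comp,
      ← mapBifunctorCochain_add, mappingCone.id, mapBifunctorCochain_id]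

end MappingCone

end MapBifunctor

section Acyclic

lemma acyclic_iff_of_iso {C ι : Type*} [Category* C] [HasZeroMorphisms C] {c : ComplexShape ι}
    {K L : HomologicalComplex C c} (e : K ≅ L) : K.Acyclic ↔ L.Acyclic :=
  ⟨fun h i ↦ (h i).of_iso e, fun h i ↦ (h i).of_iso e.symm⟩

lemma quasiIso_iff_acyclic_mappingCone {C : Type*} [Category* C] [Abelian C]
    {K L : CochainComplex C ℤ} (φ : K ⟶ L) : QuasiIso φ ↔ (mappingCone φ).Acyclic := by
  rw [← HomologicalComplex.mem_quasiIso_iff, ← HomotopyCategory.quotient_map_mem_quasiIso_iff,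
    HomotopyCategory.quasiIso_eq_trW_subcategoryAcyclic,
    ← HomotopyCategory.quotient_obj_mem_subcategoryAcyclic_iff_acyclic]
  exact ObjectProperty.trW_iff_of_distinguished _ _
    (HomotopyCategory.mappingCone_triangleh_distinguished φ)

variable {C₁ C₂ D : Type*} [Category* C₁] [Category* C₂] [Category* D]
  [Preadditive C₁] [Preadditive C₂] [Abelian D]
  (F : C₁ ⥤ C₂ ⥤ D) [F.Additive] [∀ X₁, (F.obj X₁).Additive]

lemma quasiIso_mapBifunctorMap_left_iff_acyclic [HasBinaryBiproducts C₁] {K L : CochainComplex C₁ ℤ}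
    (φ : K ⟶ L) (X : CochainComplex C₂ ℤ) [HasMapBifunctor K X F (.up ℤ)]
    [HasMapBifunctor L X F (.up ℤ)] [HasMapBifunctor (mappingCone φ) X F (.up ℤ)] :
    QuasiIso (mapBifunctorMap φ (𝟙 X) F (.up ℤ)) ↔
      (mapBifunctor (mappingCone φ) X F (.up ℤ)).Acyclic :=
  (quasiIso_iff_acyclic_mappingCone _).trans
    (acyclic_iff_of_iso (mapBifunctorMappingConeIso F φ X))

lemma quasiIso_mapBifunctorMap_right_iff_acyclic [HasBinaryBiproducts C₂] (K : CochainComplex C₁ ℤ)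
    {X Y : CochainComplex C₂ ℤ} (f : X ⟶ Y) [HasMapBifunctor K X F (.up ℤ)]
    [HasMapBifunctor K Y F (.up ℤ)] [HasMapBifunctor K (mappingCone f) F (.up ℤ)] :
    QuasiIso (mapBifunctorMap (𝟙 K) f F (.up ℤ)) ↔
      (mapBifunctor K (mappingCone f) F (.up ℤ)).Acyclic := by
  have : F.flip.Additive := { }
  have (X₂ : C₂) : (F.flip.obj X₂).Additive := { }
  rw [← acyclic_iff_of_iso (mapBifunctorFlipIso K (mappingCone f) F (.up ℤ)),
    ← quasiIso_mapBifunctorMap_left_iff_acyclic F.flip f K,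
    ← quasiIso_iff_comp_left (mapBifunctorFlipIso K X F (.up ℤ)).hom,
    ← mapBifunctorFlipIso_hom_naturality, quasiIso_iff_comp_right]

end Acyclic

section Linear

variable {R C : Type*} [Category* C] [Preadditive C]

lemma homologyMap_smul [Semiring R] [Linear R C] {ι : Type*} {c : ComplexShape ι}
    {K L : HomologicalComplex C c} (r : R) (φ : K ⟶ L) (i : ι) [K.HasHomology i] [L.HasHomology i] :
    homologyMap (r • φ) i = r • homologyMap φ i :=
  ShortComplex.homologyMap_smul ((shortComplexFunctor C c i).map φ) r

lemma tensorHom_smul_id [CommRing R] [Linear R C] [MonoidalCategory C]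
    [MonoidalPreadditive C] [MonoidalLinear R C] (r : R) (K X : CochainComplex C ℤ)
    [HasTensor K X] :
    tensorHom (r • 𝟙 K) (𝟙 X) = r • 𝟙 (tensorObj K X) := by
  ext p i₁ i₂ hi
  simp

end Linear

section Noetherian

universe v

variable {R : Type u} [CommRing R]

lemma subsingleton_of_smul_surjective {M : Type*} [AddCommGroup M] [Module R M] [Module.Finite R M]
    {x : R} (hx : x ∈ Ideal.jacobson (⊥ : Ideal R))
    (h : Function.Surjective (fun m : M ↦ x • m)) : Subsingleton M := by
  refine (Submodule.subsingleton_iff R).1 (subsingleton_of_bot_eq_top (Eq.symm ?_))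
  refine Submodule.eq_bot_of_le_smul_of_le_jacobson_bot (Ideal.span {x}) ⊤ Module.Finite.fg_top
    (fun m _ ↦ ?_) ((Ideal.span_singleton_le_iff_mem _).2 hx)
  obtain ⟨m', rfl⟩ := h m
  exact Submodule.smul_mem_smul (Ideal.mem_span_singleton_self x) trivial

lemma quasiIso_smul_id_iff_acyclic {ι : Type*} {c : ComplexShape ι} {x : R}
    (hx : x ∈ Ideal.jacobson (⊥ : Ideal R)) (Z : HomologicalComplex (ModuleCat.{v} R) c)
    [∀ i, Module.Finite R (Z.homology i)] : QuasiIso (x • 𝟙 Z) ↔ Z.Acyclic := by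
  refine ⟨fun h i ↦ ?_, fun h ↦ ⟨fun i ↦ (quasiIsoAt_iff_exactAt _ i (h i)).2 (h i)⟩⟩
  have hsurj : Function.Surjective (homologyMap (x • 𝟙 Z) i) :=
    (ModuleCat.epi_iff_surjective _).1 inferInstance
  rw [homologyMap_smul, homologyMap_id] at hsurj
  have := subsingleton_of_smul_surjective hx hsurj
  exact (exactAt_iff_isZero_homology _ _).2 (ModuleCat.isZero_of_subsingleton _)

lemma isNoetherian_homology_of_iso {ι : Type*} {c : ComplexShape ι}
    {K L : HomologicalComplex (ModuleCat.{v} R) c} (e : K ≅ L) (i : ι)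
    [IsNoetherian R (K.homology i)] : IsNoetherian R (L.homology i) :=
  isNoetherian_of_linearEquiv (homologyMapIso e i).toLinearEquiv

lemma isNoetherian_homology_mappingCone {K L : CochainComplex (ModuleCat.{v} R) ℤ} (φ : K ⟶ L)
    [∀ i, IsNoetherian R (K.homology i)] [∀ i, IsNoetherian R (L.homology i)] (i : ℤ) :
    IsNoetherian R ((mappingCone φ).homology i) := by
  let _ := HasDerivedCategory.standard (ModuleCat.{v} R)
  have exact₃ := homologyMap_exact₃_of_distTriang _
    (DerivedCategory.mappingCone_triangle_distinguished φ) i (i + 1)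
  have : IsNoetherian R ((mappingCone.triangle φ).obj₂.homology i) :=
    inferInstanceAs (IsNoetherian R (L.homology i))
  have : IsNoetherian R ((mappingCone.triangle φ).obj₁.homology (i + 1)) :=
    inferInstanceAs (IsNoetherian R (K.homology (i + 1)))
  exact isNoetherian_of_range_eq_ker _ _ exact₃.moduleCat_range_eq_ker

end Noetherian

section Koszul

variable {R : Type u} [CommRing R]

/-- The Koszul complex on the empty sequence is the tensor unit. -/
noncomputable def koszulComplexNilTensorIso (Z : CochainComplex (ModuleCat.{u} R) ℤ) :
    HomologicalComplex.tensorObj (koszulComplex R []) Z ≅ Z :=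
  HomologicalComplex.leftUnitor Z

/-- The tensor product with `K(x, xs)` is the mapping cone of multiplication by `x` on the tensor
product with `K(xs)`. -/
noncomputable def koszulComplexConsTensorIso (x : R) (xs : List R)
    (Z : CochainComplex (ModuleCat.{u} R) ℤ) :
    mappingCone (x • 𝟙 (HomologicalComplex.tensorObj (koszulComplex R xs) Z)) ≅
      HomologicalComplex.tensorObj (koszulComplex R (x :: xs)) Z :=
  eqToIso (congrArg (mappingCone ·) (tensorHom_smul_id x _ Z).symm) ≪≫
    mapBifunctorMappingConeIso (curriedTensor _) (x • 𝟙 (koszulComplex R xs)) Z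

lemma isNoetherian_homology_koszul_tensor (xs : List R) (Z : CochainComplex (ModuleCat.{u} R) ℤ)
    [∀ i, IsNoetherian R (Z.homology i)] (i : ℤ) :
    IsNoetherian R ((HomologicalComplex.tensorObj (koszulComplex R xs) Z).homology i) := by
  induction xs generalizing i with
  | nil => exact isNoetherian_homology_of_iso (koszulComplexNilTensorIso Z).symm i
  | cons x xs ih =>
    have := isNoetherian_homology_mappingCone
      (x • 𝟙 (HomologicalComplex.tensorObj (koszulComplex R xs) Z)) i
    exact isNoetherian_homology_of_iso (koszulComplexConsTensorIso x xs Z) i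

lemma acyclic_koszul_tensor_iff (xs : List R) (hxs : ∀ x ∈ xs, x ∈ Ideal.jacobson (⊥ : Ideal R))
    (Z : CochainComplex (ModuleCat.{u} R) ℤ) [∀ i, IsNoetherian R (Z.homology i)] :
    (HomologicalComplex.tensorObj (koszulComplex R xs) Z).Acyclic ↔ Z.Acyclic := by
  induction xs with
  | nil => exact acyclic_iff_of_iso (koszulComplexNilTensorIso Z)
  | cons x xs ih =>
    have := isNoetherian_homology_koszul_tensor xs Z
    rw [← acyclic_iff_of_iso (koszulComplexConsTensorIso x xs Z),
      ← quasiIso_iff_acyclic_mappingCone,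
      quasiIso_smul_id_iff_acyclic (hxs x List.mem_cons_self),
      ih fun y hy ↦ hxs y (List.mem_cons_of_mem x hy)]

end Koszul

theorem quasiIso_iff_quasiIso_koszul_tensor_general
    (R : Type u) [CommRing R] (X Y : CochainComplex (ModuleCat.{u} R) ℤ) (f : X ⟶ Y)
    [∀ i : ℤ, IsNoetherian R (X.homology i)] [∀ i : ℤ, IsNoetherian R (Y.homology i)]
    (xs : List R) (hxs : ∀ x ∈ xs, x ∈ Ideal.jacobson (⊥ : Ideal R)) :
    QuasiIso f ↔
      QuasiIso (HomologicalComplex.tensorHom (𝟙 (koszulComplex R xs)) f :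
        HomologicalComplex.tensorObj (koszulComplex R xs) X ⟶
          HomologicalComplex.tensorObj (koszulComplex R xs) Y) := by
  have := isNoetherian_homology_mappingCone f
  rw [quasiIso_mapBifunctorMap_right_iff_acyclic, acyclic_koszul_tensor_iff xs hxs,
    quasiIso_iff_acyclic_mappingCone]

/-- Let `R` be a commutative Noetherian ring and `f : X ⟶ Y` a morphism of complexes of
`R`-modules whose homology modules are all finitely generated.  Let `x₁, …, xₙ` be a sequence
of elements of the Jacobson radical of `R` and `K = K^R(x₁, …, xₙ)` the corresponding Koszul
complex.  Then `f` is a quasi-isomorphism iff `K ⊗_R f` is a quasi-isomorphism. -/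
theorem quasiIso_iff_quasiIso_koszul_tensor
    (R : Type u) [CommRing R] [IsNoetherianRing R]
    (X Y : CochainComplex (ModuleCat.{u} R) ℤ) (f : X ⟶ Y)
    (hX : ∀ i : ℤ, Module.Finite R (X.homology i))
    (hY : ∀ i : ℤ, Module.Finite R (Y.homology i))
    (xs : List R) (hxs : ∀ x ∈ xs, x ∈ Ideal.jacobson (⊥ : Ideal R)) :
    QuasiIso f ↔
      QuasiIso (HomologicalComplex.tensorHom (𝟙 (koszulComplex R xs)) f :
        HomologicalComplex.tensorObj (koszulComplex R xs) X ⟶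
          HomologicalComplex.tensorObj (koszulComplex R xs) Y) :=
  quasiIso_iff_quasiIso_koszul_tensor_general R X Y f xs hxs
end

section
/- Let φ : (R,m) → (S,n) be a flat local homomorphism of commutative Noetherian local rings such that the induced map R/m → S/mS is an isomorphism, and let M and N be finitely generated R-modules. If for every prime ideal p ∈ Supp_R(M) ∩ Supp_R(N) the induced ring map R/p → S/pS is an isomorphism, then for every i ≥ 0 the R-module Tor_i^R(M,N) has an S-module structure compatible with its R-module structure via φ. -/
universe u

open CategoryTheory TensorProduct

/-- An `R`-module `L` has an `S`-module structure compatible with its `R`-module structure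
via `algebraMap R S` if there is an `S`-scalar multiplication making `L` an `S`-module
such that `algebraMap R S r • x = r • x` for all `r : R`, `x : L`. -/
def HasCompatibleSModule (R S L : Type*) [CommRing R] [CommRing S] [Algebra R S]
    [AddCommGroup L] [Module R L] : Prop :=
  ∃ inst : Module S L, ∀ (r : R) (x : L), (letI := inst; (algebraMap R S r) • x) = r • x

/-- `Tor_i^R(M, N)` as an object of `ModuleCat R`. -/
noncomputable def torModule (R : Type u) [CommRing R] (M N : Type u) [AddCommGroup M]
    [Module R M] [AddCommGroup N] [Module R N] (i : ℕ) : ModuleCat.{u} R :=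
  ((Tor (ModuleCat.{u} R) i).obj (ModuleCat.of R M)).obj (ModuleCat.of R N)

/-!
Say that an `R`-module `K` is unchanged by base change to `S` if `K → S ⊗[R] K` is bijective. By
flatness and the five lemma this passes to extensions, so by prime filtrations it holds for every
finite `K` such that `R ⧸ p → S ⧸ pS` is bijective for all `p ∈ Supp K`. In particular it holds for
`R ⧸ I` with `I = Ann M + Ann N`, whose support is `Supp M ∩ Supp N`; inverting
`R ⧸ I → S ⊗[R] R ⧸ I` gives an `R`-algebra map `S → R ⧸ I`. Since `Tor` is `R`-linear in both
variables, `I` annihilates it, and so `S` acts on it through `R ⧸ I`.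
-/

section BaseChange

/-- An `R`-module `K` is unchanged by base change to the `R`-algebra `S` if the canonical map
`K → S ⊗[R] K`, `x ↦ 1 ⊗ x`, is bijective. -/
def IsBaseChangeInvariant (R S K : Type*) [CommRing R] [CommRing S] [Algebra R S]
    [AddCommGroup K] [Module R K] : Prop :=
  Function.Bijective (TensorProduct.mk R S K 1)

variable {R S : Type*} [CommRing R] [CommRing S] [Algebra R S]
  {K K₁ K₂ K₃ : Type*} [AddCommGroup K] [Module R K] [AddCommGroup K₁] [Module R K₁]
  [AddCommGroup K₂] [Module R K₂] [AddCommGroup K₃] [Module R K₃]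

theorem isBaseChangeInvariant_of_subsingleton [Subsingleton K] : IsBaseChangeInvariant R S K :=
  ⟨Function.injective_of_subsingleton _, Function.surjective_to_subsingleton _⟩

theorem IsBaseChangeInvariant.of_linearEquiv (hK : IsBaseChangeInvariant R S K₁)
    (e : K₁ ≃ₗ[R] K₂) : IsBaseChangeInvariant R S K₂ := by
  have hcomm : TensorProduct.mk R S K₂ 1 =
      (e.lTensor S).toLinearMap ∘ₗ TensorProduct.mk R S K₁ 1 ∘ₗ e.symm.toLinearMap := by
    ext x
    simp
  rw [IsBaseChangeInvariant, hcomm]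
  exact (e.lTensor S).bijective.comp (hK.comp e.symm.bijective)

theorem IsBaseChangeInvariant.of_exact [Module.Flat R S] {f : K₁ →ₗ[R] K₂} {g : K₂ →ₗ[R] K₃}
    (hf : Function.Injective f) (hg : Function.Surjective g) (hfg : Function.Exact f g)
    (h₁ : IsBaseChangeInvariant R S K₁) (h₃ : IsBaseChangeInvariant R S K₃) :
    IsBaseChangeInvariant R S K₂ :=
  have hf' := Module.Flat.lTensor_preserves_injective_linearMap (M := S) f hf
  have hg' := LinearMap.lTensor_surjective S hg
  LinearMap.bijective_of_surjective_of_bijective_of_bijective_of_injective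
    (0 : Unit →ₗ[R] K₁) f g (0 : K₃ →ₗ[R] Unit)
    (0 : Unit →ₗ[R] S ⊗[R] K₁) (f.lTensor S) (g.lTensor S) (0 : S ⊗[R] K₃ →ₗ[R] Unit)
    0 (TensorProduct.mk R S K₁ 1) (TensorProduct.mk R S K₂ 1) (TensorProduct.mk R S K₃ 1) 0
    (by simp) rfl rfl (by simp)
    ((f.exact_zero_iff_injective _).2 hf) hfg ((g.exact_zero_iff_surjective _).2 hg)
    ((LinearMap.exact_zero_iff_injective _ _).2 hf') (lTensor_exact S hfg hg)
    ((LinearMap.exact_zero_iff_surjective _ _).2 hg')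
    (Function.surjective_to_subsingleton _) h₁ h₃ (Function.injective_of_subsingleton _)

theorem isBaseChangeInvariant_quotient_iff (I : Ideal R) :
    IsBaseChangeInvariant R S (R ⧸ I) ↔
      Function.Bijective
        (Ideal.quotientMap (I.map (algebraMap R S)) (algebraMap R S) Ideal.le_comap_map) := by
  let e := Algebra.TensorProduct.quotIdealMapEquivTensorQuot S I
  have hcomm : ⇑(TensorProduct.mk R S (R ⧸ I) 1) =
      e ∘ Ideal.quotientMap (I.map (algebraMap R S)) (algebraMap R S) Ideal.le_comap_map := by
    ext x
    obtain ⟨r, rfl⟩ := Ideal.Quotient.mk_surjective x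
    rw [Function.comp_apply, Ideal.quotientMap_mk]
    trans algebraMap R S r ⊗ₜ[R] (1 : R ⧸ I)
    · rw [Algebra.algebraMap_eq_smul_one, TensorProduct.smul_tmul]
      simp [Algebra.smul_def]
    · rfl
  rw [IsBaseChangeInvariant, hcomm]
  exact e.bijective.of_comp_iff' _

theorem isBaseChangeInvariant_of_support [IsNoetherianRing R] [Module.Flat R S]
    [hK : Module.Finite R K]
    (h : ∀ p ∈ Module.support R K, IsBaseChangeInvariant R S (R ⧸ p.asIdeal)) :
    IsBaseChangeInvariant R S K := by
  induction hK using IsNoetherianRing.induction_on_isQuotientEquivQuotientPrime R with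
  | subsingleton K => exact isBaseChangeInvariant_of_subsingleton
  | quotient K p e =>
    refine (h p ?_).of_linearEquiv e.symm
    rw [e.support_eq, Module.support_eq_zeroLocus, Ideal.annihilator_quotient]
    exact le_refl p.asIdeal
  | exact K₁ K₂ K₃ f g hf hg hfg ih₁ ih₃ =>
    exact .of_exact hf hg hfg
      (ih₁ fun p hp ↦ h p (Module.support_subset_of_injective f hf hp))
      (ih₃ fun p hp ↦ h p (Module.support_subset_of_surjective g hg hp))

theorem IsBaseChangeInvariant.hasCompatibleSModule {A L : Type*} [Ring A] [Algebra R A]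
    [AddCommGroup L] [Module R L] [Module A L] [IsScalarTower R A L]
    (hA : IsBaseChangeInvariant R S A) : HasCompatibleSModule R S L := by
  let e : A ≃ₐ[R] S ⊗[R] A := .ofBijective Algebra.TensorProduct.includeRight hA
  let ψ : S →ₐ[R] A := e.symm.toAlgHom.comp Algebra.TensorProduct.includeLeft
  refine ⟨Module.compHom L ψ.toRingHom, fun r x ↦ ?_⟩
  change ψ (algebraMap R S r) • x = r • x
  rw [ψ.commutes, algebraMap_smul]

theorem hasCompatibleSModule_of_le_annihilator {L : Type*} [AddCommGroup L] [Module R L]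
    {I : Ideal R} (hI : IsBaseChangeInvariant R S (R ⧸ I)) (hL : I ≤ Module.annihilator R L) :
    HasCompatibleSModule R S L := by
  have hL' : Module.IsTorsionBySet R L I := fun x a ↦ Module.mem_annihilator.1 (hL a.2) x
  let := hL'.module
  exact hI.hasCompatibleSModule

theorem support_quotient_annihilator_sup_annihilator (M N : Type*) [AddCommGroup M] [Module R M]
    [Module.Finite R M] [AddCommGroup N] [Module R N] [Module.Finite R N] :
    Module.support R (R ⧸ Module.annihilator R M ⊔ Module.annihilator R N) =
      Module.support R M ∩ Module.support R N := by
  simp only [Module.support_eq_zeroLocus, Ideal.annihilator_quotient,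
    PrimeSpectrum.zeroLocus_sup]

end BaseChange

section LinearFunctors

variable {R : Type*} [Semiring R] {C D : Type*} [Category* C] [Category* D]

instance homologyFunctor_linear [Preadditive C] [Linear R C] [CategoryWithHomology C]
    {ι : Type*} (c : ComplexShape ι) (n : ι) :
    (HomologicalComplex.homologyFunctor C c n).Linear R where
  map_smul f r := ShortComplex.homologyMap_smul
    ((HomologicalComplex.shortComplexFunctor C c n).map f) r

instance single₀_linear [Preadditive C] [Limits.HasZeroObject C] [Linear R C] :
    (ChainComplex.single₀ C).Linear R where
  map_smul f r := by
    ext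
    rw [HomologicalComplex.smul_f_apply, ChainComplex.single₀_map_f_zero,
      ChainComplex.single₀_map_f_zero]
    rfl

variable [Abelian C] [HasProjectiveResolutions C] [Abelian D] [Linear R D]

instance leftDerived_linear [Linear R C] (F : C ⥤ D) [F.Additive] [F.Linear R] (n : ℕ) :
    (F.leftDerived n).Linear R where
  map_smul {X Y} f r := by
    let P := projectiveResolution X
    let Q := projectiveResolution Y
    let g : P.complex ⟶ Q.complex := ProjectiveResolution.lift f P Q
    have hg : g ≫ Q.π = P.π ≫ (ChainComplex.single₀ C).map f :=
      ProjectiveResolution.lift_commutes f P Q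
    have hrg : (r • g) ≫ Q.π = P.π ≫ (ChainComplex.single₀ C).map (r • f) := by
      rw [Functor.map_smul, Linear.smul_comp, Linear.comp_smul, hg]
    rw [Functor.leftDerived_map_eq F n f g hg, Functor.leftDerived_map_eq F n (r • f) (r • g) hrg,
      Functor.map_smul, Linear.smul_comp, Linear.comp_smul]

theorem leftDerived_smul {F G : C ⥤ D} [F.Additive] [G.Additive] (r : R) (α : F ⟶ G) (n : ℕ) :
    NatTrans.leftDerived (r • α) n = r • NatTrans.leftDerived α n := by
  ext X
  let P := projectiveResolution X
  have hsmul : (NatTrans.mapHomologicalComplex (r • α) (.down ℕ)).app P.complex =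
      r • (NatTrans.mapHomologicalComplex α (.down ℕ)).app P.complex := rfl
  change _ = r • (NatTrans.leftDerived α n).app X
  rw [P.leftDerived_app_eq, P.leftDerived_app_eq, hsmul, Functor.map_smul,
    Linear.smul_comp, Linear.comp_smul]

variable [Linear R C] [MonoidalCategory C] [MonoidalPreadditive C] [MonoidalLinear R C]

instance tor_obj_linear (X : C) (n : ℕ) : ((Tor C n).obj X).Linear R :=
  inferInstanceAs ((((MonoidalCategory.tensoringLeft C).obj X).leftDerived n).Linear R)

instance tor_flip_obj_linear (Y : C) (n : ℕ) : ((Tor C n).flip.obj Y).Linear R where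
  map_smul f r := by
    have hsmul : (MonoidalCategory.tensoringLeft C).map (r • f) =
        r • (MonoidalCategory.tensoringLeft C).map f := by
      ext Z
      exact MonoidalLinear.smul_whiskerRight r f Z
    change (NatTrans.leftDerived ((MonoidalCategory.tensoringLeft C).map (r • f)) n).app Y = _
    rw [hsmul, leftDerived_smul]
    rfl

end LinearFunctors

section Annihilator

universe v w

theorem mem_annihilator_iff_smul_id_eq_zero {R : Type*} [CommRing R] {X : ModuleCat.{v} R}
    {r : R} : r ∈ Module.annihilator R X ↔ r • 𝟙 X = 0 := by
  rw [Module.mem_annihilator]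
  refine ⟨fun h ↦ ?_, fun h x ↦ congr($h x)⟩
  ext x
  exact h x

theorem annihilator_le_annihilator_obj {R : Type*} [CommRing R]
    (F : ModuleCat.{v} R ⥤ ModuleCat.{w} R) [F.Linear R] (X : ModuleCat.{v} R) :
    Module.annihilator R X ≤ Module.annihilator R (F.obj X) := by
  intro r hr
  rw [mem_annihilator_iff_smul_id_eq_zero] at hr ⊢
  rw [← F.map_id, ← F.map_smul, hr, ← zero_smul R (𝟙 X), F.map_smul, zero_smul]

theorem annihilator_sup_annihilator_le_annihilator_torModule {R : Type u} [CommRing R]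
    (M N : Type u) [AddCommGroup M] [Module R M] [AddCommGroup N] [Module R N] (i : ℕ) :
    Module.annihilator R M ⊔ Module.annihilator R N ≤
      Module.annihilator R (torModule R M N i) :=
  sup_le
    (annihilator_le_annihilator_obj ((Tor (ModuleCat.{u} R) i).flip.obj (.of R N)) (.of R M))
    (annihilator_le_annihilator_obj ((Tor (ModuleCat.{u} R) i).obj (.of R M)) (.of R N))

end Annihilator

theorem tor_hasCompatibleSModule_general (R : Type u) (S : Type*) [CommRing R] [CommRing S]
    [IsNoetherianRing R] [Algebra R S] [Module.Flat R S]
    (M N : Type u) [AddCommGroup M] [Module R M] [Module.Finite R M]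
    [AddCommGroup N] [Module R N] [Module.Finite R N]
    (h : ∀ p : PrimeSpectrum R, p ∈ Module.support R M ∩ Module.support R N →
      Function.Bijective
        (Ideal.quotientMap (p.asIdeal.map (algebraMap R S)) (algebraMap R S)
          Ideal.le_comap_map)) (i : ℕ) :
    HasCompatibleSModule R S (torModule R M N i) := by
  have hI : IsBaseChangeInvariant R S (R ⧸ Module.annihilator R M ⊔ Module.annihilator R N) := by
    refine isBaseChangeInvariant_of_support fun p hp ↦ ?_
    rw [support_quotient_annihilator_sup_annihilator] at hp
    exact (isBaseChangeInvariant_quotient_iff p.asIdeal).2 (h p hp)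
  exact hasCompatibleSModule_of_le_annihilator hI
    (annihilator_sup_annihilator_le_annihilator_torModule M N i)

/-- Let `φ : (R, m) → (S, n)` be a flat local homomorphism of commutative Noetherian local
rings such that `R/m → S/mS` is an isomorphism, and let `M`, `N` be finitely generated
`R`-modules. If `R/p → S/pS` is an isomorphism for every `p ∈ Supp_R M ∩ Supp_R N`, then
`Tor_i^R(M, N)` has a compatible `S`-module structure for all `i ≥ 0`. -/
theorem tor_hasCompatibleSModule
    (R S : Type u) [CommRing R] [CommRing S] [IsLocalRing R] [IsLocalRing S]
    [IsNoetherianRing R] [IsNoetherianRing S] [Algebra R S] [Module.Flat R S]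
    [IsLocalHom (algebraMap R S)]
    (hres : Function.Bijective
      (Ideal.quotientMap ((IsLocalRing.maximalIdeal R).map (algebraMap R S)) (algebraMap R S)
        Ideal.le_comap_map))
    (M N : Type u) [AddCommGroup M] [Module R M] [Module.Finite R M]
    [AddCommGroup N] [Module R N] [Module.Finite R N]
    (h : ∀ p : PrimeSpectrum R, p ∈ Module.support R M ∩ Module.support R N →
      Function.Bijective
        (Ideal.quotientMap (p.asIdeal.map (algebraMap R S)) (algebraMap R S)
          Ideal.le_comap_map)) :
    ∀ i : ℕ, HasCompatibleSModule R S (torModule R M N i) :=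
  tor_hasCompatibleSModule_general R S M N h
end

section
/- Let φ : (R,m) → (S,n) be a flat local homomorphism of commutative Noetherian local rings such that the induced map R/m → S/mS is an isomorphism, and let M and N be finitely generated R-modules. If for each i with 0 ≤ i ≤ dim_R(N) − 1 the R-module Ext^i_R(M,N) has an S-module structure compatible with its R-module structure via φ, then for every prime ideal p ∈ Supp_R(M) ∩ Supp_R(N) the induced ring map R/p → S/pS is an isomorphism. -/
universe u

open CategoryTheory TensorProduct

/-- `Ext^i_R(M, N)` as an object of `ModuleCat R`. -/
noncomputable def extModule (R : Type u) [CommRing R] (M N : Type u) [AddCommGroup M]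
    [Module R M] [AddCommGroup N] [Module R N] (i : ℕ) : ModuleCat.{u} R :=
  ((Ext R (ModuleCat.{u} R) i).obj (Opposite.op (ModuleCat.of R M))).obj (ModuleCat.of R N)

/-!
For `p` in both supports there is an `i` with `dim R/p + i ≤ dim N` and `p ∈ Supp Ext^i(M, N)`. If
`p` is associated to `N`, then `i = 0` works, because `M` has a nonzero map to `R/p ⊆ N`. Otherwise
choose `x ∈ p` outside the minimal primes of `N` and the associated primes of `N` below `p`: passing
to `N/xN` lowers the dimension, multiplication by `x` is injective on `N` near `p`, and the long
exact sequence moves `p` from the support of `Ext^i(M, N/xN)` to that of `Ext^i(M, N)` or of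
`Ext^{i+1}(M, N)`.

Unless `p = m`, this gives `i < dim N`, so `L = Ext^i(M, N)` is a finitely generated `R`-module with
a compatible `S`-module structure and `p ∈ Supp L`. Since `S = R + mS`, Nakayama's lemma shows that
`Sx = Rx` for every `x ∈ L` and that every ideal `J` of `S` with `S = R + J` is extended from `R`.
Taking for `J` the annihilator of an `x` with `Ann_R x ⊆ p` gives `J = (Ann_R x)S ⊆ pS`, so
`S = R + pS`. Injectivity holds because `pS ∩ R` annihilates `L/pL`, whose support contains `p`.
-/

universe t w v

section ExtComparison

variable {C : Type u} [Category.{v} C] [Abelian C] [HasExt.{w} C] {X Y : C}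
  (P : ProjectiveResolution X)

theorem extMk_zero_eq_zero_iff {m : ℕ} (f : P.complex.X 0 ⟶ Y) (hm : 0 + 1 = m)
    (hf : P.complex.d m 0 ≫ f = 0) : P.extMk f m hm hf = 0 ↔ f = 0 := by
  subst hm
  refine ⟨fun h => ?_, by rintro rfl; exact P.extMk_zero 1 rfl⟩
  rw [← P.extEquivCohomologyClass.apply_eq_iff_eq,
    ProjectiveResolution.extEquivCohomologyClass_extMk,
    ProjectiveResolution.extEquivCohomologyClass_zero,
    CochainComplex.HomComplex.CohomologyClass.mk_eq_zero_iff,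
    CochainComplex.HomComplex.Cocycle.toSingleMk_mem_coboundaries_iff _ _ _ _ _ 1 (by simp)] at h
  obtain ⟨g, hg⟩ := h
  have hg0 : g = 0 := (CochainComplex.isZero_of_isStrictlyLE P.cochainComplex 0 1).eq_of_src _ _
  rw [hg0, Limits.comp_zero] at hg
  rw [← cancel_epi (P.cochainComplexXIso (-(0 : ℕ)) 0 rfl).hom, ← hg, Limits.comp_zero]

theorem extMk_eq_zero_iff_exists_d_prev_comp {n m : ℕ} (f : P.complex.X n ⟶ Y) (hm : n + 1 = m)
    (hf : P.complex.d m n ≫ f = 0) : P.extMk f m hm hf = 0 ↔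
      ∃ g : P.complex.X ((ComplexShape.up ℕ).prev n) ⟶ Y, P.complex.d n _ ≫ g = f := by
  cases n with
  | zero => simp [extMk_zero_eq_zero_iff P f hm hf, eq_comm]
  | succ n =>
    rw [CochainComplex.prev_nat_succ]
    exact P.extMk_eq_zero_iff f m hm hf n rfl

variable (R : Type t) [Ring R] [Linear R C]

theorem extMk_smul {n m : ℕ} (r : R) (f : P.complex.X n ⟶ Y) (hm : n + 1 = m)
    (hf : P.complex.d m n ≫ f = 0) :
    P.extMk (r • f) m hm (by simp [hf]) = r • P.extMk f m hm hf := by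
  rw [Abelian.Ext.smul_eq_comp_mk₀, P.extMk_comp_mk₀]
  simp

/-- The map from the `n`-cocycles of `Hom(P, Y)` to `Ext^n(X, Y)`, where `P` is a projective
resolution of `X`. -/
noncomputable def extMkLinearMap (Y : C) (n : ℕ) :
    LinearMap.ker ((P.complex.linearYonedaObj R Y).sc n).g.hom →ₗ[R] Abelian.Ext X Y n where
  toFun f := P.extMk f.1 _ (by simp) f.2
  map_add' f g := (P.add_extMk f.1 g.1 _ (by simp) f.2 g.2).symm
  map_smul' r f := extMk_smul P R r f.1 (by simp) f.2

theorem extMkLinearMap_surjective (n : ℕ) : Function.Surjective (extMkLinearMap P R Y n) := by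
  intro α
  obtain ⟨f, hf, rfl⟩ := P.extMk_surjective α ((ComplexShape.up ℕ).next n) (by simp)
  exact ⟨⟨f, hf⟩, rfl⟩

theorem ker_extMkLinearMap (n : ℕ) : LinearMap.ker (extMkLinearMap P R Y n) =
    LinearMap.range ((P.complex.linearYonedaObj R Y).sc n).moduleCatToCycles := by
  ext f
  exact (extMk_eq_zero_iff_exists_d_prev_comp P f.1 (by simp) f.2).trans
    ⟨fun ⟨g, hg⟩ => ⟨g, Subtype.ext hg⟩, fun ⟨g, hg⟩ => ⟨g, congrArg Subtype.val hg⟩⟩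

/-- The cohomology of `Hom(P, Y)` is `Ext^n(X, Y)` for a projective resolution `P` of `X`. -/
noncomputable def homologyLinearYonedaObjEquivExt (Y : C) (n : ℕ) :
    (P.complex.linearYonedaObj R Y).homology n ≃ₗ[R] Abelian.Ext X Y n :=
  ((P.complex.linearYonedaObj R Y).sc n).moduleCatHomologyIso.toLinearEquiv ≪≫ₗ
    (Submodule.quotEquivOfEq _ _ (ker_extMkLinearMap P R n)).symm ≪≫ₗ
    LinearMap.quotKerEquivOfSurjective _ (extMkLinearMap_surjective P R n)

/-- The `Ext` module defined by left-deriving `Hom(-, Y)` agrees with the one defined by morphisms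
in the derived category. -/
noncomputable def extLinearEquivAbelianExt [EnoughProjectives C] (X Y : C) (n : ℕ) :
    ((Ext R C n).obj (Opposite.op X)).obj Y ≃ₗ[R] Abelian.Ext X Y n :=
  ((projectiveResolution X).isoExt n Y).toLinearEquiv ≪≫ₗ
    homologyLinearYonedaObjEquivExt (projectiveResolution X) R Y n

end ExtComparison

section Support

variable {R M N : Type*} [CommRing R] [AddCommGroup M] [Module R M] [AddCommGroup N] [Module R N]
  {p : PrimeSpectrum R}

theorem nontrivial_linearMap_quotient_of_mem_support [IsNoetherianRing R] [Module.Finite R M]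
    (hp : p ∈ Module.support R M) :
    Nontrivial (M →ₗ[R] R ⧸ p.asIdeal) := by
  rw [← not_subsingleton_iff_nontrivial, IsSMulRegular.subsingleton_linearMap_iff]
  rintro ⟨r, hr, hreg⟩
  have hrp : r ∈ p.asIdeal := Module.annihilator_le_of_mem_support hp hr
  refine one_ne_zero (hreg (?_ : r • (1 : R ⧸ p.asIdeal) = r • 0))
  rw [smul_zero, Algebra.smul_def, mul_one]
  exact Ideal.Quotient.eq_zero_iff_mem.2 hrp

theorem mem_support_linearMap_of_mem_associatedPrimes [IsNoetherianRing R] [Module.Finite R M]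
    (hM : p ∈ Module.support R M)
    (hN : p.asIdeal ∈ associatedPrimes R N) : p ∈ Module.support R (M →ₗ[R] N) := by
  have := nontrivial_linearMap_quotient_of_mem_support hM
  obtain ⟨f, hf⟩ := exists_ne (0 : M →ₗ[R] R ⧸ p.asIdeal)
  obtain ⟨-, i, hi⟩ := (isAssociatedPrime_iff_exists_injective_linearMap _ _).1 hN
  refine Module.mem_support_iff'.2 ⟨i ∘ₗ f, fun r hr hif => hf ?_⟩
  ext m
  have hrf : r • f m = 0 := hi (by simpa using LinearMap.congr_fun hif m)
  rw [Algebra.smul_def, mul_eq_zero] at hrf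
  exact hrf.resolve_left (mt Ideal.Quotient.eq_zero_iff_mem.1 hr)

theorem exists_mem_associatedPrimes_le_of_mem_support [IsNoetherianRing R] [Module.Finite R N]
    (hp : p ∈ Module.support R N) :
    ∃ q ∈ associatedPrimes R N, q ≤ p.asIdeal := by
  obtain ⟨q, hq, hqp⟩ := Ideal.exists_minimalPrimes_le (Module.annihilator_le_of_mem_support hp)
  exact ⟨q, Module.associatedPrimes.minimalPrimes_annihilator_subset_associatedPrimes R N hq, hqp⟩

variable (N) in
theorem exists_mem_forall_associatedPrimes_notMem [IsNoetherianRing R] [Module.Finite R N]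
    (I : Ideal R) : ∃ x ∈ I, ∀ q ∈ associatedPrimes R N, ¬ I ≤ q → x ∉ q := by
  by_contra! hcon
  have hfin : {q ∈ associatedPrimes R N | ¬ I ≤ q}.Finite :=
    (associatedPrimes.finite R N).subset fun _ hq => hq.1
  have hcover : (I : Set R) ⊆ ⋃ q ∈ {q ∈ associatedPrimes R N | ¬ I ≤ q}, q := by
    intro x hx
    obtain ⟨q, hq, hIq, hxq⟩ := hcon x hx
    exact Set.mem_biUnion (x := q) ⟨hq, hIq⟩ hxq
  obtain ⟨q, hq, hIq⟩ := (Ideal.subset_union_prime_finite (f := id) hfin ⊥ ⊥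
    fun q hq _ _ => hq.1.isPrime).1 hcover
  exact hq.2 hIq

theorem exists_mem_forall_notMem_of_notMem_associatedPrimes [IsNoetherianRing R]
    [Module.Finite R N] (hp : p ∈ Module.support R N) (hass : p.asIdeal ∉ associatedPrimes R N) :
    ∃ x ∈ p.asIdeal, (∀ q ∈ associatedPrimes R N, q ≤ p.asIdeal → x ∉ q) ∧
      ∀ q ∈ (Module.annihilator R N).minimalPrimes, x ∉ q := by
  obtain ⟨x, hxp, hx⟩ := exists_mem_forall_associatedPrimes_notMem N p.asIdeal
  refine ⟨x, hxp, fun q hq hqp => hx q hq fun hpq => hass (le_antisymm hqp hpq ▸ hq),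
    fun q hq => ?_⟩
  have hqass := Module.associatedPrimes.minimalPrimes_annihilator_subset_associatedPrimes R N hq
  exact hx q hqass fun hpq => hass <|
    le_antisymm hpq (hq.2 ⟨p.isPrime, Module.annihilator_le_of_mem_support hp⟩ hpq) ▸ hqass

theorem notMem_support_ker_of_forall_associatedPrimes [IsNoetherianRing R] [Module.Finite R N]
    {x : R} (hx : ∀ q ∈ associatedPrimes R N, q ≤ p.asIdeal → x ∉ q) :
    p ∉ Module.support R (LinearMap.ker (LinearMap.lsmul R N x)) := by
  intro hp
  obtain ⟨q, hq, hqp⟩ := exists_mem_associatedPrimes_le_of_mem_support hp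
  have hxK : x ∈ Module.annihilator R (LinearMap.ker (LinearMap.lsmul R N x)) :=
    Module.mem_annihilator.2 fun y => Subtype.ext y.2
  rw [← Submodule.annihilator_top] at hxK
  exact hx q (associatedPrimes.subset_of_injective (Submodule.injective_subtype _) hq) hqp
    (hq.annihilator_le hxK)

theorem annihilator_lt_annihilator_quotSMulTop {x : R} (hx : x ∉ Module.annihilator R N) :
    Module.annihilator R N < Module.annihilator R (QuotSMulTop x N) :=
  lt_of_le_of_ne (LinearMap.annihilator_le_of_surjective _ (Submodule.mkQ_surjective _))
    fun h => hx (h ▸ QuotSMulTop.mem_annihilator N x)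

open Pointwise in
variable (N) in
theorem exact_lsmul_mkQ (x : R) :
    Function.Exact (LinearMap.lsmul R N x) (Submodule.mkQ (x • (⊤ : Submodule R N))) := by
  rw [LinearMap.exact_iff, Submodule.ker_mkQ, ← Submodule.map_top]
  rfl

theorem one_le_ringKrullDim_quotient {p : Ideal R} [p.IsPrime] (hp : ¬ p.IsMaximal) :
    1 ≤ ringKrullDim (R ⧸ p) := by
  contrapose! hp
  have : Ring.KrullDimLE 0 (R ⧸ p) :=
    Ring.krullDimLE_iff.2 (ENat.WithBot.lt_add_one_iff.1 (by simpa using hp))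
  exact Ideal.Quotient.maximal_of_isField _ Ring.KrullDimLE.isField_of_isDomain

end Support

section LinearExtSupport

variable {R : Type u} [CommRing R] {C : Type*} [Category.{v} C] [Abelian C] [HasExt.{w} C]
  [Linear R C] {X : C} {p : PrimeSpectrum R} {n : ℕ}

theorem mem_support_ext_X₂_or_mem_support_ext_X₁ {T : ShortComplex C} (hT : T.ShortExact)
    (hp : p ∈ Module.support R (Abelian.Ext X T.X₃ n)) :
    p ∈ Module.support R (Abelian.Ext X T.X₂ n) ∨
      p ∈ Module.support R (Abelian.Ext X T.X₁ (n + 1)) := by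
  contrapose! hp
  simp only [Module.notMem_support_iff'] at hp ⊢
  intro α
  obtain ⟨r, hr, hrα⟩ := hp.2 (α.comp hT.extClass rfl)
  rw [← Abelian.Ext.smul_comp] at hrα
  obtain ⟨β, hβ⟩ := Abelian.Ext.covariant_sequence_exact₃ X hT _ rfl hrα
  obtain ⟨s, hs, hsβ⟩ := hp.1 β
  refine ⟨s * r, p.isPrime.mul_notMem hs hr, ?_⟩
  rw [mul_smul, ← hβ, ← Abelian.Ext.smul_comp, hsβ, Abelian.Ext.zero_comp]

end LinearExtSupport

section ExtSupport

variable {R : Type u} [CommRing R] [Small.{v} R] {p : PrimeSpectrum R} {n : ℕ}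

theorem annihilator_le_annihilator_ext (X Y : ModuleCat.{v} R) (n : ℕ) :
    Module.annihilator R Y ≤ Module.annihilator R (Abelian.Ext X Y n) := by
  intro r hr
  have hrY : r • 𝟙 Y = 0 := by
    ext y
    exact Module.mem_annihilator.1 hr y
  refine Module.mem_annihilator.2 fun α => ?_
  rw [Abelian.Ext.smul_eq_comp_mk₀, hrY, Abelian.Ext.mk₀_zero, Abelian.Ext.comp_zero]

theorem support_ext_subset (X Y : ModuleCat.{v} R) [Module.Finite R Y] (n : ℕ) :
    Module.support R (Abelian.Ext X Y n) ⊆ Module.support R Y := fun _ hp =>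
  Module.mem_support_iff_of_finite.2 <|
    (annihilator_le_annihilator_ext X Y n).trans (Module.annihilator_le_of_mem_support hp)

theorem mem_support_ext_of_exact {X : ModuleCat.{v} R} {N₁ N₂ N₃ : Type v} [AddCommGroup N₁]
    [Module R N₁] [AddCommGroup N₂] [Module R N₂] [AddCommGroup N₃] [Module R N₃]
    {f : N₁ →ₗ[R] N₂} {g : N₂ →ₗ[R] N₃} [Module.Finite R (LinearMap.ker f)]
    (hfg : Function.Exact f g) (hg : Function.Surjective g)
    (hf : p ∉ Module.support R (LinearMap.ker f))
    (hp : p ∈ Module.support R (Abelian.Ext X (ModuleCat.of R N₃) n)) :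
    p ∈ Module.support R (Abelian.Ext X (ModuleCat.of R N₂) n) ∨
      p ∈ Module.support R (Abelian.Ext X (ModuleCat.of R N₁) (n + 1)) := by
  let f' : N₁ →ₗ[R] LinearMap.ker g := f.codRestrict _ hfg.apply_apply_eq_zero
  have hf' : Function.Surjective f' := fun ⟨y, hy⟩ =>
    ((hfg y).1 hy).imp fun x hx => Subtype.ext hx
  have hker : LinearMap.ker f' = LinearMap.ker f := LinearMap.ker_codRestrict _ _ _
  have : Module.Finite R (LinearMap.ker f') := by rwa [hker]
  refine (mem_support_ext_X₂_or_mem_support_ext_X₁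
    (LinearMap.shortExact_shortComplexKer hg) hp).imp_right fun hp' => ?_
  refine (mem_support_ext_X₂_or_mem_support_ext_X₁
    (LinearMap.shortExact_shortComplexKer hf') hp').resolve_right fun hpK => hf ?_
  rw [← hker]
  exact support_ext_subset _ (.of R (LinearMap.ker f')) _ hpK

variable {M N : Type v} [AddCommGroup M] [Module R M] [AddCommGroup N] [Module R N]

theorem mem_support_ext_of_mem_support_ext_quotSMulTop [IsNoetherianRing R]
    [Module.Finite R N] {X : ModuleCat.{v} R} {x : R}
    (hx : ∀ q ∈ associatedPrimes R N, q ≤ p.asIdeal → x ∉ q)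
    (hp : p ∈ Module.support R (Abelian.Ext X (ModuleCat.of R (QuotSMulTop x N)) n)) :
    p ∈ Module.support R (Abelian.Ext X (ModuleCat.of R N) n) ∨
      p ∈ Module.support R (Abelian.Ext X (ModuleCat.of R N) (n + 1)) :=
  mem_support_ext_of_exact (exact_lsmul_mkQ N x) (Submodule.mkQ_surjective _)
    (notMem_support_ker_of_forall_associatedPrimes hx) hp

theorem exists_mem_support_ext [IsNoetherianRing R] [Module.Finite R M] [Module.Finite R N]
    (hM : p ∈ Module.support R M) (hN : p ∈ Module.support R N) :
    ∃ i : ℕ, ringKrullDim (R ⧸ p.asIdeal) + i ≤ Module.supportDim R N ∧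
      p ∈ Module.support R (Abelian.Ext (ModuleCat.of R M) (ModuleCat.of R N) i) := by
  induction h : Module.annihilator R N using WellFoundedGT.induction generalizing N with | _ I ih
  subst h
  by_cases hass : p.asIdeal ∈ associatedPrimes R N
  · obtain ⟨-, j, hj⟩ := (isAssociatedPrime_iff_exists_injective_linearMap _ _).1 hass
    refine ⟨0, ?_, ?_⟩
    · rw [Nat.cast_zero, add_zero, ← Module.supportDim_quotient_eq_ringKrullDim]
      exact Module.supportDim_le_of_injective j hj
    · rw [(Abelian.Ext.linearEquiv₀.trans ModuleCat.homLinearEquiv).support_eq]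
      exact mem_support_linearMap_of_mem_associatedPrimes hM hass
  obtain ⟨x, hxp, hxass, hxmin⟩ := exists_mem_forall_notMem_of_notMem_associatedPrimes hN hass
  have hN' : p ∈ Module.support R (QuotSMulTop x N) := by
    rw [Module.support_quotSMulTop]
    exact ⟨hN, by simpa using hxp⟩
  have hlt : Module.annihilator R N < Module.annihilator R (QuotSMulTop x N) := by
    obtain ⟨q, hq, -⟩ := Ideal.exists_minimalPrimes_le (Module.annihilator_le_of_mem_support hN)
    exact annihilator_lt_annihilator_quotSMulTop (mt (@hq.1.2 x) (hxmin q hq))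
  obtain ⟨i, hi, hpi⟩ := ih _ hlt hN' rfl
  have hdim : ringKrullDim (R ⧸ p.asIdeal) + (i + 1 : ℕ) ≤ Module.supportDim R N := by
    rw [Nat.cast_add, Nat.cast_one, ← add_assoc]
    exact (add_le_add_left hi 1).trans
      (Module.supportDim_quotSMulTop_succ_le_of_notMem_minimalPrimes hxmin)
  rcases mem_support_ext_of_mem_support_ext_quotSMulTop hxass hpi with h | h
  · exact ⟨i, le_trans (by gcongr; simp) hdim, h⟩
  · exact ⟨i + 1, hdim, h⟩

end ExtSupport

section ScalarExtension

variable {R S : Type*} [CommRing R] [CommRing S] [Algebra R S] {I : Ideal R} {J K : Ideal S}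

theorem surjective_quotientMap_map_iff :
    Function.Surjective (Ideal.quotientMap (I.map (algebraMap R S)) (algebraMap R S)
      Ideal.le_comap_map) ↔ Function.Surjective (algebraMap R (S ⧸ I.map (algebraMap R S))) :=
  (Function.Surjective.of_comp_iff _ Ideal.Quotient.mk_surjective).symm

theorem surjective_algebraMap_quotient_of_le (hJK : J ≤ K)
    (hJ : Function.Surjective (algebraMap R (S ⧸ J))) :
    Function.Surjective (algebraMap R (S ⧸ K)) :=
  (Ideal.Quotient.factor_surjective hJK).comp hJ

theorem surjective_algebraMap_quotient_iff :
    Function.Surjective (algebraMap R (S ⧸ J)) ↔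
      (1 : Submodule R S) ⊔ J.restrictScalars R = ⊤ := by
  rw [Function.Surjective, Ideal.Quotient.mk_surjective.forall, Submodule.eq_top_iff']
  refine forall_congr' fun s => ?_
  simp only [Submodule.mem_sup, Submodule.mem_one, exists_exists_eq_and]
  refine exists_congr fun r => eq_comm.trans (Ideal.Quotient.eq.trans ?_)
  exact ⟨fun h => ⟨_, h, by ring⟩, fun ⟨j, hj, h⟩ => by rwa [← h, add_sub_cancel_left]⟩

theorem surjective_algebraMap_quotient_map_iff :
    Function.Surjective (algebraMap R (S ⧸ I.map (algebraMap R S))) ↔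
      (1 : Submodule R S) ⊔ I • ⊤ = ⊤ := by
  rw [surjective_algebraMap_quotient_iff, Ideal.smul_top_eq_map]

theorem map_comap_eq_of_surjective_algebraMap_quotient (hJfg : J.FG)
    (hIjac : I.map (algebraMap R S) ≤ Ideal.jacobson ⊥)
    (hI : Function.Surjective (algebraMap R (S ⧸ I.map (algebraMap R S))))
    (hJ : Function.Surjective (algebraMap R (S ⧸ J))) :
    (J.comap (algebraMap R S)).map (algebraMap R S) = J := by
  rw [surjective_algebraMap_quotient_map_iff] at hI
  rw [surjective_algebraMap_quotient_iff] at hJ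
  have hIJ : (1 : Submodule R S) ⊔ I • J.restrictScalars R = ⊤ := by
    rw [eq_top_iff, ← hI, ← hJ, Submodule.smul_sup, ← sup_assoc]
    exact sup_le_sup_right (sup_le le_rfl Submodule.smul_le_right) _
  refine le_antisymm Ideal.map_comap_le
    (Submodule.le_of_le_smul_of_le_jacobson_bot hJfg hIjac fun b hb => ?_)
  obtain ⟨a, ha, c, hc, rfl⟩ := Submodule.mem_sup.1 (hIJ.ge (Submodule.mem_top (x := b)))
  obtain ⟨r, rfl⟩ := Submodule.mem_one.1 ha
  have hr : algebraMap R S r ∈ J :=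
    (Submodule.add_mem_iff_left _ (Submodule.smul_le_right hc)).1 hb
  rw [← Ideal.smul_restrictScalars] at hc
  exact Submodule.add_mem_sup (Ideal.mem_map_of_mem _ hr) hc

variable {L : Type*} [AddCommGroup L] [Module R L]

theorem range_eq_span_singleton_of_surjective_algebraMap_quotient (f : S →ₗ[R] L)
    (hf : (LinearMap.range f).FG) (hIjac : I ≤ Ideal.jacobson ⊥)
    (hI : Function.Surjective (algebraMap R (S ⧸ I.map (algebraMap R S)))) :
    LinearMap.range f = Submodule.span R {f 1} := by
  rw [surjective_algebraMap_quotient_map_iff] at hI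
  have hrange : LinearMap.range f = Submodule.span R {f 1} ⊔ I • LinearMap.range f := by
    conv_lhs => rw [LinearMap.range_eq_map, ← hI, Submodule.map_sup, Submodule.map_smul'',
      Submodule.one_eq_span, Submodule.map_span, Set.image_singleton, ← LinearMap.range_eq_map]
  refine le_antisymm (Submodule.le_of_le_smul_of_le_jacobson_bot hf hIjac hrange.le) ?_
  exact (Submodule.span_singleton_le_iff_mem _ _).2 (LinearMap.mem_range_self f 1)

variable [Module S L] [IsScalarTower R S L] {p : PrimeSpectrum R}

theorem surjective_algebraMap_quotient_torsionOf [IsNoetherian R L] (hIjac : I ≤ Ideal.jacobson ⊥)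
    (hI : Function.Surjective (algebraMap R (S ⧸ I.map (algebraMap R S)))) (x : L) :
    Function.Surjective (algebraMap R (S ⧸ Ideal.torsionOf S L x)) := by
  let f : S →ₗ[R] L := (LinearMap.toSpanSingleton S L x).restrictScalars R
  have hf := range_eq_span_singleton_of_surjective_algebraMap_quotient f
    (IsNoetherian.noetherian _) hIjac hI
  rw [Function.Surjective, Ideal.Quotient.mk_surjective.forall]
  intro s
  obtain ⟨r, hr⟩ := Submodule.mem_span_singleton.1 (hf.le (LinearMap.mem_range_self f s))
  refine ⟨r, Ideal.Quotient.eq.2 ?_⟩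
  simpa [f, sub_smul, sub_eq_zero] using hr

theorem surjective_algebraMap_quotient_map_of_mem_support [IsNoetherianRing S] [IsNoetherian R L]
    (hIjac : I ≤ Ideal.jacobson ⊥) (hISjac : I.map (algebraMap R S) ≤ Ideal.jacobson ⊥)
    (hI : Function.Surjective (algebraMap R (S ⧸ I.map (algebraMap R S))))
    (hp : p ∈ Module.support R L) :
    Function.Surjective (algebraMap R (S ⧸ p.asIdeal.map (algebraMap R S))) := by
  obtain ⟨x, hx⟩ := Module.mem_support_iff_exists_annihilator.1 hp
  have hxS := surjective_algebraMap_quotient_torsionOf hIjac hI x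
  refine surjective_algebraMap_quotient_of_le ?_ hxS
  rw [← map_comap_eq_of_surjective_algebraMap_quotient (IsNoetherian.noetherian _) hISjac hI hxS]
  refine Ideal.map_mono (le_trans (fun r hr => ?_) hx)
  rw [Ideal.mem_comap, Ideal.mem_torsionOf_iff, algebraMap_smul] at hr
  exact (Submodule.mem_annihilator_span_singleton _ _).2 hr

theorem comap_map_le_of_mem_support [Module.Finite R L] (hp : p ∈ Module.support R L) :
    (p.asIdeal.map (algebraMap R S)).comap (algebraMap R S) ≤ p.asIdeal := by
  have hpL : p ∈ Module.support R (L ⧸ p.asIdeal • (⊤ : Submodule R L)) := by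
    rw [Module.support_quotient]
    exact ⟨hp, Set.Subset.rfl⟩
  refine le_trans (fun r hr => Module.mem_annihilator.2 ?_)
    (Module.annihilator_le_of_mem_support hpL)
  rw [(Submodule.mkQ_surjective _).forall]
  intro y
  have hry : algebraMap R S r • y ∈ p.asIdeal • (⊤ : Submodule R L) := by
    rw [← Submodule.restrictScalars_top R S L, ← Ideal.smul_restrictScalars,
      Submodule.restrictScalars_mem]
    exact Submodule.smul_mem_smul (Ideal.mem_comap.1 hr) Submodule.mem_top
  rw [← map_smul, ← LinearMap.mem_ker, Submodule.ker_mkQ]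
  rwa [algebraMap_smul] at hry

theorem bijective_quotientMap_map_of_mem_support [IsNoetherianRing S] [IsNoetherian R L]
    (hIjac : I ≤ Ideal.jacobson ⊥) (hISjac : I.map (algebraMap R S) ≤ Ideal.jacobson ⊥)
    (hI : Function.Surjective (algebraMap R (S ⧸ I.map (algebraMap R S))))
    (hp : p ∈ Module.support R L) :
    Function.Bijective (Ideal.quotientMap (p.asIdeal.map (algebraMap R S)) (algebraMap R S)
      Ideal.le_comap_map) :=
  ⟨Ideal.quotientMap_injective' (comap_map_le_of_mem_support (L := L) hp),
    surjective_quotientMap_map_iff.2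
      (surjective_algebraMap_quotient_map_of_mem_support hIjac hISjac hI hp)⟩

theorem map_le_jacobson_bot_of_injective_quotientMap [IsLocalRing S] (hI : I ≠ ⊤)
    (h : Function.Injective (Ideal.quotientMap (I.map (algebraMap R S)) (algebraMap R S)
      Ideal.le_comap_map)) : I.map (algebraMap R S) ≤ Ideal.jacobson ⊥ := by
  have := Ideal.Quotient.nontrivial_iff.2 hI
  have hIS : I.map (algebraMap R S) ≠ ⊤ := Ideal.Quotient.nontrivial_iff.1 h.nontrivial
  exact (IsLocalRing.le_maximalIdeal hIS).trans (IsLocalRing.maximalIdeal_le_jacobson _)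

end ScalarExtension

theorem support_bijective_of_ext_hasCompatibleSModule_general
    (R : Type u) (S : Type*) [CommRing R] [CommRing S] [IsLocalRing R] [IsLocalRing S]
    [IsNoetherianRing R] [IsNoetherianRing S] [Algebra R S]
    (hres : Function.Bijective
      (Ideal.quotientMap ((IsLocalRing.maximalIdeal R).map (algebraMap R S)) (algebraMap R S)
        Ideal.le_comap_map))
    (M N : Type u) [AddCommGroup M] [Module R M] [Module.Finite R M]
    [AddCommGroup N] [Module R N] [Module.Finite R N]
    (h : ∀ i : ℕ, ((i : ℕ∞) : WithBot ℕ∞) < ringKrullDim (R ⧸ Module.annihilator R N) →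
      HasCompatibleSModule R S (extModule R M N i)) :
    ∀ p : PrimeSpectrum R, p ∈ Module.support R M ∩ Module.support R N →
      Function.Bijective
        (Ideal.quotientMap (p.asIdeal.map (algebraMap R S)) (algebraMap R S)
          Ideal.le_comap_map) := by
  rintro p ⟨hM, hN⟩
  by_cases hp : p.asIdeal.IsMaximal
  · obtain rfl : p = IsLocalRing.closedPoint R :=
      PrimeSpectrum.ext (IsLocalRing.eq_maximalIdeal hp)
    exact hres
  obtain ⟨i, hi, hpi⟩ := exists_mem_support_ext hM hN
  have hlt : ((i : ℕ∞) : WithBot ℕ∞) < Module.supportDim R N := by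
    rw [ENat.WithBot.coe_eq_natCast, ← ENat.WithBot.add_one_le_iff, add_comm]
    exact (add_le_add_left (one_le_ringKrullDim_quotient hp) _).trans hi
  rw [Module.supportDim_eq_ringKrullDim_quotient_annihilator] at hlt
  obtain ⟨_, hcompat⟩ := h i hlt
  have : IsScalarTower R S (extModule R M N i) := .of_algebraMap_smul hcompat
  let e : extModule R M N i ≃ₗ[R] Abelian.Ext (ModuleCat.of R M) (ModuleCat.of R N) i :=
    extLinearEquivAbelianExt R _ _ i
  have : Module.Finite R (extModule R M N i) := Module.Finite.equiv e.symm
  refine bijective_quotientMap_map_of_mem_support (L := extModule R M N i)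
    (IsLocalRing.maximalIdeal_le_jacobson _)
    (map_le_jacobson_bot_of_injective_quotientMap Ideal.IsPrime.ne_top' hres.1)
    (surjective_quotientMap_map_iff.1 hres.2) ?_
  rwa [e.support_eq]

/-- Let `φ : (R, m) → (S, n)` be a flat local homomorphism of commutative Noetherian local
rings such that `R/m → S/mS` is an isomorphism, and let `M`, `N` be finitely generated
`R`-modules. If `Ext^i_R(M, N)` has a compatible `S`-module structure for
`i = 0, …, dim_R(N) - 1` (i.e. for all `i < dim_R(N)`, where `dim_R(N)` is the Krull
dimension of `R ⧸ Ann_R(N)`), then `R/p → S/pS` is an isomorphism for every prime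
`p ∈ Supp_R M ∩ Supp_R N`. -/
theorem support_bijective_of_ext_hasCompatibleSModule
    (R S : Type u) [CommRing R] [CommRing S] [IsLocalRing R] [IsLocalRing S]
    [IsNoetherianRing R] [IsNoetherianRing S] [Algebra R S] [Module.Flat R S]
    [IsLocalHom (algebraMap R S)]
    (hres : Function.Bijective
      (Ideal.quotientMap ((IsLocalRing.maximalIdeal R).map (algebraMap R S)) (algebraMap R S)
        Ideal.le_comap_map))
    (M N : Type u) [AddCommGroup M] [Module R M] [Module.Finite R M]
    [AddCommGroup N] [Module R N] [Module.Finite R N]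
    (h : ∀ i : ℕ, ((i : ℕ∞) : WithBot ℕ∞) < ringKrullDim (R ⧸ Module.annihilator R N) →
      HasCompatibleSModule R S (extModule R M N i)) :
    ∀ p : PrimeSpectrum R, p ∈ Module.support R M ∩ Module.support R N →
      Function.Bijective
        (Ideal.quotientMap (p.asIdeal.map (algebraMap R S)) (algebraMap R S)
          Ideal.le_comap_map) :=
  support_bijective_of_ext_hasCompatibleSModule_general R S hres M N h
end
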